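/- (Proposition 1.) The function D : ℝ → ℝ defined by D(t₂) = σ₂·φ((μ−t₂)/σ₂)·F₁ − σ₁·f₁·Φ((μ−t₂)/σ₂) attains a strict global maximum at the unique point t₂⁺ = μ + σ₁·f₁/F₁; that is, D(t₂) < D(t₂⁺) for all t₂ ≠ t₂⁺. -/

import Mathlib

open Real

/-- Density of the standard normal distribution. -/
noncomputable def stdPdf (y : ℝ) : ℝ := (Real.sqrt (2 * Real.pi))⁻¹ * Real.exp (-(y ^ 2) / 2)

/-- Cumulative distribution function of the standard normal distribution. -/
noncomputable def stdCdf (y : ℝ) : ℝ := ∫ x in Set.Iic y, stdPdf x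

/-! Since `φ' = -id * φ` and `Φ' = φ`, the derivative of `D` at `t` is a positive multiple of
`F₁ (μ - t) + σ₁ f₁`, an affine function of `t` with slope `-F₁ < 0`. Hence `D` increases strictly
up to the zero of this function and decreases strictly after it. -/

open MeasureTheory ProbabilityTheory Set Filter
open scoped Topology

theorem lt_of_deriv_pos_of_deriv_neg {f : ℝ → ℝ} {m : ℝ} (hm : ContinuousAt f m)
    (hpos : ∀ x < m, 0 < deriv f x) (hneg : ∀ x > m, deriv f x < 0) {x : ℝ} (hx : x ≠ m) :
    f x < f m := by
  have hcont (y : ℝ) : ContinuousAt f y := by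
    rcases lt_trichotomy y m with hy | rfl | hy
    · exact (differentiableAt_of_deriv_ne_zero (hpos y hy).ne').continuousAt
    · exact hm
    · exact (differentiableAt_of_deriv_ne_zero (hneg y hy).ne).continuousAt
  have hcont' : Continuous f := continuous_iff_continuousAt.2 hcont
  rcases hx.lt_or_gt with hlt | hgt
  · have hmono : StrictMonoOn f (Iic m) :=
      strictMonoOn_of_deriv_pos (convex_Iic m) hcont'.continuousOn (by simpa using hpos)
    exact hmono hlt.le self_mem_Iic hlt
  · have hanti : StrictAntiOn f (Ici m) :=
      strictAntiOn_of_deriv_neg (convex_Ici m) hcont'.continuousOn (by simpa using hneg)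
    exact hanti self_mem_Ici hgt.le hgt

theorem hasDerivAt_setIntegral_Iic {E : Type*} [NormedAddCommGroup E] [NormedSpace ℝ E]
    [CompleteSpace E] {f : ℝ → E} {a b : ℝ} (hab : a < b) (hint : IntegrableOn f (Iic b))
    (hcont : ContinuousAt f a) : HasDerivAt (fun u => ∫ x in Iic u, f x) (f a) a := by
  have hsplit : (fun u => ∫ x in Iic u, f x) =ᶠ[𝓝 a]
      fun u => (∫ x in Iic a, f x) + ∫ x in a..u, f x := by
    filter_upwards [Iic_mem_nhds hab] with u hu
    rw [← intervalIntegral.integral_Iic_sub_Iic (hint.mono_set (Iic_subset_Iic.2 hab.le))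
      (hint.mono_set (Iic_subset_Iic.2 hu)), add_sub_cancel]
  have hderiv : HasDerivAt (fun u => ∫ x in a..u, f x) (f a) a :=
    intervalIntegral.integral_hasDerivAt_right IntervalIntegrable.refl
      ⟨Iic b, Iic_mem_nhds hab, hint.aestronglyMeasurable⟩ hcont
  exact (hderiv.const_add _).congr_of_eventuallyEq hsplit

theorem stdPdf_eq_gaussianPDFReal : stdPdf = gaussianPDFReal 0 1 := by
  ext y
  simp [stdPdf, gaussianPDFReal]

theorem stdPdf_pos (y : ℝ) : 0 < stdPdf y := by
  rw [stdPdf_eq_gaussianPDFReal]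
  exact gaussianPDFReal_pos 0 1 y one_ne_zero

theorem integrable_stdPdf : Integrable stdPdf := by
  rw [stdPdf_eq_gaussianPDFReal]
  exact integrable_gaussianPDFReal 0 1

theorem hasDerivAt_stdPdf (y : ℝ) : HasDerivAt stdPdf (-y * stdPdf y) y := by
  have hexponent : HasDerivAt (fun x : ℝ => -(x ^ 2) / 2) (-y) y :=
    ((hasDerivAt_pow 2 y).neg.div_const 2).congr_deriv (by push_cast; ring)
  exact (hexponent.exp.const_mul _).congr_deriv (by rw [stdPdf]; ring)

theorem hasDerivAt_stdCdf (y : ℝ) : HasDerivAt stdCdf (stdPdf y) y :=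
  hasDerivAt_setIntegral_Iic (lt_add_one y) integrable_stdPdf.integrableOn
    (hasDerivAt_stdPdf y).continuousAt

theorem stdCdf_pos (y : ℝ) : 0 < stdCdf y := by
  have hsupport : Function.support stdPdf = univ :=
    Function.support_eq_univ fun x => (stdPdf_pos x).ne'
  rw [stdCdf, setIntegral_pos_iff_support_of_nonneg_ae
    (Eventually.of_forall fun x => (stdPdf_pos x).le) integrable_stdPdf.integrableOn,
    hsupport, univ_inter, Real.volume_Iic]
  exact ENNReal.zero_lt_top

/-- The expected advantage `D(t)` of a Group 2 member over a Group 1 member when Group 2 uses the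
claim threshold `t`. The parameters `s`, `a` and `c` stand for the paper's `σ₂`, `F₁` and
`σ₁ f₁`; the last is a single parameter because `σ₁` and `f₁` enter only through their product. -/
noncomputable def unanimityAdvantage (μ s a c t : ℝ) : ℝ :=
  s * stdPdf ((μ - t) / s) * a - c * stdCdf ((μ - t) / s)

theorem hasDerivAt_unanimityAdvantage (μ : ℝ) {s : ℝ} (hs : s ≠ 0) (a c t : ℝ) :
    HasDerivAt (unanimityAdvantage μ s a c)
      (stdPdf ((μ - t) / s) / s * (a * (μ - t) + c)) t := by
  have hscore : HasDerivAt (fun x => (μ - x) / s) (-1 / s) t :=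
    ((hasDerivAt_id t).const_sub μ).div_const s
  have hpdf := (((hasDerivAt_stdPdf _).comp t hscore).const_mul s).mul_const a
  have hcdf := ((hasDerivAt_stdCdf _).comp t hscore).const_mul c
  exact (hpdf.sub hcdf).congr_deriv (by field_simp; ring)

theorem advantage_max_unanimous_acceptance_general (μ : ℝ) {s a : ℝ} (hs : 0 < s) (ha : 0 < a)
    (c : ℝ) {t : ℝ} (ht : t ≠ μ + c / a) :
    unanimityAdvantage μ s a c t < unanimityAdvantage μ s a c (μ + c / a) := by
  have hderiv (x : ℝ) : deriv (unanimityAdvantage μ s a c) x =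
      stdPdf ((μ - x) / s) / s * (a * (μ + c / a - x)) := by
    rw [(hasDerivAt_unanimityAdvantage μ hs.ne' a c x).deriv]
    field_simp
    ring
  have hfactor (x : ℝ) : 0 < stdPdf ((μ - x) / s) / s := div_pos (stdPdf_pos _) hs
  refine lt_of_deriv_pos_of_deriv_neg
    (hasDerivAt_unanimityAdvantage μ hs.ne' a c _).continuousAt (fun x hx => ?_)
    (fun x hx => ?_) ht
  · rw [hderiv]
    exact mul_pos (hfactor x) (mul_pos ha (sub_pos.2 hx))
  · rw [hderiv]
    exact mul_neg_of_pos_of_neg (hfactor x) (mul_neg_of_pos_of_neg ha (sub_neg.2 hx))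

/-- Proposition 1: under the unanimous acceptance group rule, the expected advantage
`D(t₂) = σ₂·φ((μ−t₂)/σ₂)·F₁ − σ₁·f₁·Φ((μ−t₂)/σ₂)` of a Group 2 member over a Group 1
member attains a strict global maximum at the unique point `t₂⁺ = μ + σ₁·f₁/F₁`. -/
theorem advantage_max_unanimous_acceptance
    (μ σ : ℝ) (hσ : 0 < σ) (g₁ g₂ : ℕ) (hg₁ : 1 ≤ g₁) (hg₂ : 1 ≤ g₂) (t₁ : ℝ)
    (σ₁ σ₂ : ℝ) (hσ₁ : σ₁ = σ / Real.sqrt g₁) (hσ₂ : σ₂ = σ / Real.sqrt g₂)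
    (F₁ f₁ : ℝ) (hF₁ : F₁ = stdCdf ((μ - t₁) / σ₁)) (hf₁ : f₁ = stdPdf ((μ - t₁) / σ₁))
    (D : ℝ → ℝ)
    (hD : D = fun t₂ => σ₂ * stdPdf ((μ - t₂) / σ₂) * F₁ - σ₁ * f₁ * stdCdf ((μ - t₂) / σ₂)) :
    ∀ t₂ : ℝ, t₂ ≠ μ + σ₁ * f₁ / F₁ → D t₂ < D (μ + σ₁ * f₁ / F₁) := by
  have hσ₂_pos : 0 < σ₂ := hσ₂ ▸ div_pos hσ (Real.sqrt_pos.2 (Nat.cast_pos.2 hg₂))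
  exact hD ▸ fun _ =>
    advantage_max_unanimous_acceptance_general μ hσ₂_pos (hF₁ ▸ stdCdf_pos _) (σ₁ * f₁)
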